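/- arXiv:2202.09599 — 3 statements merged into one kernel-verified Lean document; each statement's English description precedes it below -/
import Mathlib

section
/- Let λ, ω ∈ ℝ and let μ : ℝ → ℝ be a twice differentiable function with μ(t) > 0 for all t, satisfying μ''(t) = 2λ/μ(t) + 1/μ(t)³ + ω² μ(t). Then the function a : ℝ → ℂ defined by a(t) = 1/μ(t)² − i μ'(t)/μ(t) satisfies the Riccati-type equation i a'(t) = a(t)² + 2λ Re(a(t)) + ω² for all t ∈ ℝ. -/
/-- If `μ : ℝ → ℝ` is twice differentiable, positive, and satisfies
`μ'' = 2λ/μ + 1/μ³ + ω² μ`, then `a(t) = 1/μ(t)² − i μ'(t)/μ(t)` satisfies the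
Riccati-type equation `i a' = a² + 2 λ Re a + ω²`. -/
theorem stmt_2 (lam om : ℝ) (μ : ℝ → ℝ)
    (hd1 : Differentiable ℝ μ) (hd2 : Differentiable ℝ (deriv μ))
    (hpos : ∀ t : ℝ, 0 < μ t)
    (hODE : ∀ t : ℝ, deriv (deriv μ) t = 2 * lam / μ t + 1 / (μ t) ^ 3 + om ^ 2 * μ t) :
    ∀ t : ℝ,
      Complex.I * deriv (fun t : ℝ =>
          ((1 / (μ t) ^ 2 : ℝ) : ℂ) - Complex.I * ((deriv μ t / μ t : ℝ) : ℂ)) t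
        = (((1 / (μ t) ^ 2 : ℝ) : ℂ) - Complex.I * ((deriv μ t / μ t : ℝ) : ℂ)) ^ 2
          + 2 * (lam : ℂ)
            * (((((1 / (μ t) ^ 2 : ℝ) : ℂ)
                - Complex.I * ((deriv μ t / μ t : ℝ) : ℂ)).re : ℝ) : ℂ)
          + (om : ℂ) ^ 2 := by
  intro t
  have hne : μ t ≠ 0 := (hpos t).ne'
  have h1 := (hd1 t).hasDerivAt
  have h2 := (hd2 t).hasDerivAt
  have hA : HasDerivAt (fun t : ℝ => 1 / (μ t) ^ 2) (-2 * deriv μ t / (μ t) ^ 3) t := by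
    have h := (hasDerivAt_const t (1 : ℝ)).fun_div (h1.fun_pow 2) (pow_ne_zero 2 hne)
    refine h.congr_deriv ?_
    field_simp
    push_cast
    ring
  have hB : HasDerivAt (fun t : ℝ => deriv μ t / μ t)
      (2 * lam / (μ t) ^ 2 + 1 / (μ t) ^ 4 + om ^ 2 - (deriv μ t / μ t) ^ 2) t := by
    have h := h2.fun_div h1 hne
    rw [hODE t] at h
    refine h.congr_deriv ?_
    field_simp
  have hC := hA.ofReal_comp.fun_sub (hB.ofReal_comp.const_mul Complex.I)
  rw [hC.deriv]
  have hre : (((1 / (μ t) ^ 2 : ℝ) : ℂ) - Complex.I * ((deriv μ t / μ t : ℝ) : ℂ)).re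
      = 1 / (μ t) ^ 2 := by
    rw [Complex.sub_re, Complex.re_mul_ofReal, Complex.ofReal_re, Complex.I_re]
    ring
  rw [hre]
  have hc : (μ t : ℂ) ≠ 0 := Complex.ofReal_ne_zero.mpr hne
  push_cast
  linear_combination (-(2 * lam / (μ t : ℂ) ^ 2 + 1 / (μ t : ℂ) ^ 4 + om ^ 2)) * Complex.I_sq
end

section
/- Let λ, ω ∈ ℝ and let μ : ℝ → ℝ be a twice differentiable function with μ(t) > 0 for all t ≥ 0, satisfying μ''(t) = 2λ/μ(t) + 1/μ(t)³ + ω² μ(t) for all t ≥ 0. Then there exists δ > 0 such that μ(t) ≥ δ for all t ≥ 0. -/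
/-- If `μ : ℝ → ℝ` is twice differentiable, positive on `[0, ∞)`, and satisfies
`μ'' = 2λ/μ + 1/μ³ + ω² μ` for all `t ≥ 0`, then `μ` is bounded away from zero on
`[0, ∞)`: there exists `δ > 0` with `μ(t) ≥ δ` for all `t ≥ 0`. -/
theorem stmt_4 (lam om : ℝ) (μ : ℝ → ℝ)
    (hd1 : Differentiable ℝ μ) (hd2 : Differentiable ℝ (deriv μ))
    (hpos : ∀ t : ℝ, 0 ≤ t → 0 < μ t)
    (hODE : ∀ t : ℝ, 0 ≤ t →
      deriv (deriv μ) t = 2 * lam / μ t + 1 / (μ t) ^ 3 + om ^ 2 * μ t) :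
    ∃ δ : ℝ, 0 < δ ∧ ∀ t : ℝ, 0 ≤ t → δ ≤ μ t := by
  have hE : ∀ t : ℝ, 0 ≤ t → HasDerivAt
      (fun t => (deriv μ t) ^ 2 - 4 * lam * Real.log (μ t) + ((μ t) ^ 2)⁻¹ - om ^ 2 * (μ t) ^ 2)
      0 t := by
    intro t ht
    have hp := hpos t ht
    have h1 := (hd1 t).hasDerivAt
    have h2 := (hd2 t).hasDerivAt
    rw [hODE t ht] at h2
    have h3 := (((h2.pow 2).sub ((h1.log hp.ne').const_mul (4 * lam))).add
      ((h1.pow 2).inv (pow_ne_zero 2 hp.ne'))).sub ((h1.pow 2).const_mul (om ^ 2))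
    refine HasDerivAt.congr_deriv (f := _) h3 ?_
    simp only [Pi.pow_apply]
    field_simp
    ring
  set E : ℝ → ℝ :=
    (fun t => (deriv μ t) ^ 2 - 4 * lam * Real.log (μ t) + ((μ t) ^ 2)⁻¹ - om ^ 2 * (μ t) ^ 2)
    with hEdef
  have hconst : ∀ t : ℝ, 0 ≤ t → E t = E 0 := by
    intro t ht
    exact constant_of_has_deriv_right_zero
      (fun x hx => (hE x hx.1).continuousAt.continuousWithinAt)
      (fun x hx => (hE x hx.1).hasDerivWithinAt) t ⟨ht, le_refl t⟩
  set K : ℝ := |E 0| + 4 * |lam| + om ^ 2 with hK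
  have hK0 : 0 ≤ K := by positivity
  refine ⟨(1 + K)⁻¹, by positivity, fun t ht => ?_⟩
  have hp := hpos t ht
  by_contra! hlt
  have hx : 1 + K < (μ t)⁻¹ := (lt_inv_comm₀ hp (by positivity)).1 hlt
  have hc := hconst t ht
  have hEt : E t = (deriv μ t) ^ 2 - 4 * lam * Real.log (μ t) + ((μ t) ^ 2)⁻¹
    - om ^ 2 * (μ t) ^ 2 := rfl
  have hlog : Real.log (μ t)⁻¹ ≤ (μ t)⁻¹ - 1 := Real.log_le_sub_one_of_pos (by positivity)
  have hlog0 : 0 ≤ Real.log (μ t)⁻¹ := Real.log_nonneg (by linarith)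
  have hq1 : μ t ≤ 1 := hlt.le.trans (inv_le_one_of_one_le₀ (by linarith))
  have hq2 : (μ t) ^ 2 ≤ 1 := pow_le_one₀ hp.le hq1
  rw [← inv_pow] at hEt
  have hl : Real.log (μ t) = - Real.log (μ t)⁻¹ := by rw [Real.log_inv, neg_neg]
  rw [hl] at hEt
  generalize (μ t)⁻¹ = x at *
  generalize Real.log x = L at *
  have a1 : -lam * L ≤ |lam| * x :=
    (mul_le_mul_of_nonneg_right (neg_le_abs lam) hlog0).trans
      (mul_le_mul_of_nonneg_left (by linarith) (abs_nonneg _))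
  have a2 : om ^ 2 * (μ t) ^ 2 ≤ om ^ 2 * 1 := mul_le_mul_of_nonneg_left hq2 (sq_nonneg _)
  have a3 : x ^ 2 ≤ |E 0| + 4 * (|lam| * x) + om ^ 2 := by
    have := le_abs_self (E 0)
    have := sq_nonneg (deriv μ t)
    linarith
  have hx1 : 0 ≤ x - 1 := by linarith
  have a4 := mul_nonneg (abs_nonneg (E 0)) hx1
  have a5 := mul_nonneg (sq_nonneg om) hx1
  have a6 : (1 + K) * x < x * x := mul_lt_mul_of_pos_right hx (by linarith)
  rw [hK] at a6
  nlinarith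
end

section
/- Let ω > 0 and λ ∈ ℝ with −ω < λ < 0. Let μ : [0,∞) → ℝ be a twice differentiable function with μ(t) > 0 for all t ≥ 0, satisfying μ''(t) = 2λ/μ(t) + 1/μ(t)³ + ω² μ(t) for all t ≥ 0. Then μ is unbounded, and moreover there exist constants c, Cₑ > 0 and T ≥ 0 such that c·e^{ωt} ≤ μ(t) ≤ Cₑ·e^{ωt} for all t ≥ T. -/
lemma mono_aux (f f' : ℝ → ℝ) (T : ℝ) (h : ∀ t, T ≤ t → HasDerivAt f (f' t) t)
    (h0 : ∀ t, T ≤ t → 0 ≤ f' t) (t : ℝ) (ht : T ≤ t) : f T ≤ f t := by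
  have hm : MonotoneOn f (Set.Ici T) := by
    apply monotoneOn_of_deriv_nonneg (convex_Ici T)
    · intro x hx
      exact (h x hx).continuousAt.continuousWithinAt
    · intro x hx
      rw [interior_Ici] at hx
      exact (h x (le_of_lt hx)).differentiableAt.differentiableWithinAt
    · intro x hx
      rw [interior_Ici] at hx
      rw [(h x (le_of_lt hx)).deriv]
      exact h0 x (le_of_lt hx)
  exact hm (Set.mem_Ici.2 le_rfl) (Set.mem_Ici.2 ht) ht

lemma force_lower (lam om : ℝ) (hom : 0 < om) (hlam1 : -om < lam) (hlam2 : lam < 0) :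
    ∃ η : ℝ, 0 < η ∧ ∀ m : ℝ, 0 < m → η ≤ 2 * lam / m + 1 / m ^ 3 + om ^ 2 * m := by
  obtain ⟨d, hd⟩ : ∃ d, d = (om + lam) / om := ⟨_, rfl⟩
  have hd0 : 0 < d := by rw [hd]; apply div_pos <;> linarith
  have hl : lam = (d - 1) * om := by rw [hd]; field_simp; ring
  have hd1 : d < 1 := by nlinarith
  refine ⟨d * min 1 (om ^ 2), by positivity, fun m hm => ?_⟩
  have e : 2 * lam / m + 1 / m ^ 3 + om ^ 2 * m
      = d * (1 / m ^ 3 + om ^ 2 * m) + (1 - d) * (om * m ^ 2 - 1) ^ 2 / m ^ 3 := by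
    rw [hl]; field_simp; ring
  have h2 : 0 ≤ (1 - d) * (om * m ^ 2 - 1) ^ 2 / m ^ 3 := by
    have : 0 ≤ 1 - d := by linarith
    positivity
  have h3 : min 1 (om ^ 2) ≤ 1 / m ^ 3 + om ^ 2 * m := by
    rcases le_total 1 m with h | h
    · have : 0 < 1 / m ^ 3 := by positivity
      have := min_le_right 1 (om ^ 2)
      nlinarith [sq_nonneg om]
    · have : 1 ≤ 1 / m ^ 3 := by
        rw [le_div_iff₀ (by positivity), one_mul]
        exact pow_le_one₀ hm.le h
      have := min_le_left 1 (om ^ 2)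
      have : 0 ≤ om ^ 2 * m := by positivity
      linarith
  rw [e]
  have := mul_le_mul_of_nonneg_left h3 hd0.le
  linarith

/-- In the regime `−ω < λ < 0 < ω`, every positive solution of
`μ'' = 2λ/μ + 1/μ³ + ω² μ` on `[0, ∞)` is unbounded, and in fact grows exactly like
`e^{ωt}`: there are `c, Cₑ > 0` and `T ≥ 0` with `c e^{ωt} ≤ μ(t) ≤ Cₑ e^{ωt}` for
all `t ≥ T`. -/
theorem stmt_19 (lam om : ℝ) (hom : 0 < om) (hlam1 : -om < lam) (hlam2 : lam < 0)
    (μ : ℝ → ℝ)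
    (hd1 : ∀ t : ℝ, 0 ≤ t → DifferentiableAt ℝ μ t)
    (hd2 : ∀ t : ℝ, 0 ≤ t → DifferentiableAt ℝ (deriv μ) t)
    (hpos : ∀ t : ℝ, 0 ≤ t → 0 < μ t)
    (hODE : ∀ t : ℝ, 0 ≤ t →
      deriv (deriv μ) t = 2 * lam / μ t + 1 / (μ t) ^ 3 + om ^ 2 * μ t) :
    (∀ M : ℝ, ∃ t : ℝ, 0 ≤ t ∧ M < μ t) ∧
    ∃ c Ce T : ℝ, 0 < c ∧ 0 < Ce ∧ 0 ≤ T ∧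
      ∀ t : ℝ, T ≤ t →
        c * Real.exp (om * t) ≤ μ t ∧ μ t ≤ Ce * Real.exp (om * t) := by
  obtain ⟨η, hη, hF⟩ := force_lower lam om hom hlam1 hlam2
  have D1 : ∀ t, 0 ≤ t → HasDerivAt μ (deriv μ t) t := fun t ht => (hd1 t ht).hasDerivAt
  have D2 : ∀ t, 0 ≤ t → HasDerivAt (deriv μ)
      (2 * lam / μ t + 1 / (μ t) ^ 3 + om ^ 2 * μ t) t := fun t ht => by
    rw [← hODE t ht]; exact (hd2 t ht).hasDerivAt
  have hs : ∀ t, 0 ≤ t → deriv μ 0 + η * t ≤ deriv μ t := by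
    intro t ht
    have := mono_aux (fun t => deriv μ t - η * t) _ 0
      (fun t ht => (D2 t ht).sub ((hasDerivAt_id t).const_mul η))
      (fun t ht => by have := hF _ (hpos t ht); linarith) t ht
    simp only [mul_zero, sub_zero] at this
    linarith
  obtain ⟨T0, hT0, hs1⟩ : ∃ T0, 0 ≤ T0 ∧ ∀ t, T0 ≤ t → 1 ≤ deriv μ t := by
    refine ⟨max 0 ((1 - deriv μ 0) / η), le_max_left _ _, fun t ht => ?_⟩
    have h0 : 0 ≤ t := (le_max_left _ _).trans ht
    have h1 : (1 - deriv μ 0) / η ≤ t := (le_max_right _ _).trans ht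
    rw [div_le_iff₀ hη] at h1
    have := hs t h0
    linarith
  have hgrow : ∀ t, T0 ≤ t → t - T0 < μ t := by
    intro t ht
    have := mono_aux (fun t => μ t - t) _ T0
      (fun t ht => (D1 t (hT0.trans ht)).sub (hasDerivAt_id t))
      (fun t ht => by have := hs1 t ht; linarith) t ht
    have h2 := hpos T0 hT0
    linarith
  have hinf : ∀ M : ℝ, ∃ T, T0 ≤ T ∧ ∀ t, T ≤ t → M < μ t := by
    intro M
    refine ⟨max T0 (T0 + M), le_max_left _ _, fun t ht => ?_⟩
    have := hgrow t ((le_max_left _ _).trans ht)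
    have := (le_max_right _ _).trans ht
    linarith
  refine ⟨fun M => ?_, ?_⟩
  · obtain ⟨T, hT, h⟩ := hinf M
    exact ⟨T, hT0.trans hT, h T le_rfl⟩
  obtain ⟨T, hTT, hM⟩ := hinf (max 1 (-2 * lam / om ^ 2))
  have hT : 0 ≤ T := hT0.trans hTT
  have hμ1 : ∀ t, T ≤ t → 1 < μ t := fun t ht => (le_max_left _ _).trans_lt (hM t ht)
  have hμ2 : -2 * lam / om < om * μ T := by
    have := (le_max_right _ _).trans_lt (hM T le_rfl)
    rw [div_lt_iff₀ (by positivity)] at this ⊢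
    linarith
  have E : ∀ k t : ℝ, HasDerivAt (fun t => Real.exp (k * t)) (k * Real.exp (k * t)) t := by
    intro k t
    have := ((hasDerivAt_id t).const_mul k).exp
    simpa [mul_comm] using this
  have V : ∀ a t : ℝ, T ≤ t → HasDerivAt
      (fun t => (deriv μ t + om * μ t + a) * Real.exp (-om * t))
      ((2 * lam / μ t + 1 / (μ t) ^ 3 - om * a) * Real.exp (-om * t)) t := by
    intro a t ht
    have := (((D2 t (hT.trans ht)).add ((D1 t (hT.trans ht)).const_mul om)).add_const a).mul
      (E (-om) t)
    refine HasDerivAt.congr_deriv this ?_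
    simp only [Pi.add_apply]
    ring
  -- upper bound
  have hup : ∀ t, T ≤ t → (deriv μ t + om * μ t + 1 / om) * Real.exp (-om * t)
      ≤ (deriv μ T + om * μ T + 1 / om) * Real.exp (-om * T) := by
    intro t ht
    have := mono_aux _ _ T (fun t ht => (V (1 / om) t ht).neg) (fun t ht => by
      have h1 := hμ1 t ht
      have h2 : 1 / μ t ^ 3 ≤ 1 := by
        rw [div_le_one (by positivity)]; exact one_le_pow₀ h1.le
      have h3 : 2 * lam / μ t ≤ 0 := div_nonpos_of_nonpos_of_nonneg (by linarith) (by linarith)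
      have h4 : om * (1 / om) = 1 := by field_simp
      rw [h4]
      have := Real.exp_pos (-om * t)
      nlinarith) t ht
    simp only [Pi.neg_apply] at this
    linarith
  have hlo : ∀ t, T ≤ t → (deriv μ T + om * μ T + 2 * lam / om) * Real.exp (-om * T)
      ≤ (deriv μ t + om * μ t + 2 * lam / om) * Real.exp (-om * t) := by
    intro t ht
    refine mono_aux _ _ T (fun t ht => V (2 * lam / om) t ht) (fun t ht => ?_) t ht
    have h1 := hμ1 t ht
    have h2 : 0 ≤ 1 / μ t ^ 3 := by positivity
    have h3 : 2 * lam ≤ 2 * lam / μ t := by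
      rw [le_div_iff₀ (by linarith)]; nlinarith
    have h4 : om * (2 * lam / om) = 2 * lam := by field_simp
    rw [h4]
    have := Real.exp_pos (-om * t)
    apply mul_nonneg _ this.le
    linarith
  have hsT := hs1 T hTT
  have hμT := hμ1 T le_rfl
  have X : ∀ t, Real.exp (-om * t) * Real.exp (om * t) = 1 := by
    intro t; rw [← Real.exp_add]; simp
  obtain ⟨A, hA⟩ : ∃ A, A = (deriv μ T + om * μ T + 1 / om) * Real.exp (-om * T) := ⟨_, rfl⟩
  obtain ⟨B, hB⟩ : ∃ B, B = (deriv μ T + om * μ T + 2 * lam / om) * Real.exp (-om * T) :=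
    ⟨_, rfl⟩
  have hA0 : 0 < A := by
    rw [hA]; apply mul_pos _ (Real.exp_pos _)
    have : 0 < 1 / om := by positivity
    nlinarith
  have hB0 : 0 < B := by
    rw [hB]; apply mul_pos _ (Real.exp_pos _)
    have : -2 * lam / om = - (2 * lam / om) := by ring
    linarith
  have hlo' : ∀ t, T ≤ t → B * Real.exp (om * t) ≤ deriv μ t + om * μ t := by
    intro t ht
    have h := mul_le_mul_of_nonneg_right (hlo t ht) (Real.exp_pos (om * t)).le
    rw [← hB, mul_assoc _ _ (Real.exp (om * t)), X, mul_one] at h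
    have : 2 * lam / om ≤ 0 := div_nonpos_of_nonpos_of_nonneg (by linarith) hom.le
    linarith
  obtain ⟨c, hc⟩ : ∃ c, c = min (B / (2 * om)) (μ T * Real.exp (-om * T)) := ⟨_, rfl⟩
  have hc0 : 0 < c := by
    rw [hc]; apply lt_min (by positivity)
    exact mul_pos (by linarith) (Real.exp_pos _)
  have hc1 : c * (2 * om) ≤ B := by
    rw [← le_div_iff₀ (by positivity), hc]; exact min_le_left _ _
  have hc2 : c * Real.exp (om * T) ≤ μ T := by
    have : c ≤ μ T * Real.exp (-om * T) := by rw [hc]; exact min_le_right _ _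
    have h := mul_le_mul_of_nonneg_right this (Real.exp_pos (om * T)).le
    rwa [mul_assoc _ _ (Real.exp (om * T)), X, mul_one] at h
  refine ⟨c, A / om, T, hc0, by positivity, hT, fun t ht => ⟨?_, ?_⟩⟩
  · have h := mono_aux (fun t => (μ t - c * Real.exp (om * t)) * Real.exp (om * t)) _ T
      (fun t ht => ((D1 t (hT.trans ht)).sub ((E om t).const_mul c)).mul (E om t))
      (fun t ht => by
        have h1 := hlo' t ht
        have h2 := Real.exp_pos (om * t)
        have h3 := mul_le_mul_of_nonneg_right hc1 h2.le
        have h4 : 0 ≤ (deriv μ t + om * μ t - c * (2 * om) * Real.exp (om * t))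
            * Real.exp (om * t) := mul_nonneg (by linarith) h2.le
        simp only [Pi.sub_apply]
        linarith) t ht
    have h0 : 0 ≤ (μ T - c * Real.exp (om * T)) * Real.exp (om * T) :=
      mul_nonneg (by linarith) (Real.exp_pos _).le
    have := nonneg_of_mul_nonneg_left (h0.trans h) (Real.exp_pos _)
    linarith
  · have h := mul_le_mul_of_nonneg_right (hup t ht) (Real.exp_pos (om * t)).le
    rw [← hA, mul_assoc _ _ (Real.exp (om * t)), X, mul_one] at h
    have := hs1 t (hTT.trans ht)
    have : 0 < 1 / om := by positivity
    rw [div_mul_eq_mul_div, le_div_iff₀ hom]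
    linarith
end
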